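/- As α → 1, the relative α-entropy I_α(p,q) converges to the Kullback-Leibler divergence I(p,q) = Σ_x p(x) log(p(x)/q(x)). -/

import Mathlib

open Real Filter

/-!
Write `Λ w r t = log ∑ x, w x * r x ^ t`. With `t = α - 1`, the relative `α`-entropy is
`(Λ p p t - Λ p q t) / t - Λ p q t + Λ q q t`. Since `Λ p p 0 = Λ p q 0`, the first term is a
difference quotient and converges to the derivative of `Λ p p - Λ p q` at `0`, which is
`∑ p log p - ∑ p log q` divided by the mass of `p`; the other two terms converge to the logarithms
of the masses of `p` and `q`, which normalise the divergence.
-/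

section

open scoped Topology

variable {X : Type*} [Fintype X] {p q w r s : X → ℝ}

/-- The cumulant generating function of `log r` under the weights `w`. The power `r x ^ t` is
meaningful for `0 < r x`; points where `w x = 0` do not contribute. -/
noncomputable def logMoment (w r : X → ℝ) (t : ℝ) : ℝ :=
  log (∑ x, w x * r x ^ t)

/-- The relative `α`-entropy `I_α(p, q)` of two finite families of weights, as a function of `α`;
at `α = 1` it has a junk value, since the divisions are then by `0`. -/
noncomputable def relAlphaEntropy (p q : X → ℝ) (α : ℝ) : ℝ :=
  α / (1 - α) * log (∑ x, p x * q x ^ (α - 1)) - 1 / (1 - α) * log (∑ x, p x ^ α)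
    + log (∑ x, q x ^ α)

lemma hasDerivAt_sum_mul_rpow (hr : ∀ x, w x ≠ 0 → 0 < r x) (t : ℝ) :
    HasDerivAt (fun t => ∑ x, w x * r x ^ t) (∑ x, w x * (r x ^ t * log (r x))) t := by
  refine HasDerivAt.fun_sum fun x _ => ?_
  obtain hw | hw := eq_or_ne (w x) 0
  · simpa only [hw, zero_mul] using hasDerivAt_const t (0 : ℝ)
  · exact (hasStrictDerivAt_const_rpow (hr x hw) t).hasDerivAt.const_mul (w x)

lemma logMoment_zero (w r : X → ℝ) : logMoment w r 0 = log (∑ x, w x) := by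
  simp [logMoment]

lemma hasDerivAt_logMoment (hr : ∀ x, w x ≠ 0 → 0 < r x) {t : ℝ} (ht : ∑ x, w x * r x ^ t ≠ 0) :
    HasDerivAt (logMoment w r)
      ((∑ x, w x * (r x ^ t * log (r x))) / ∑ x, w x * r x ^ t) t :=
  (hasDerivAt_sum_mul_rpow hr t).log ht

lemma hasDerivAt_logMoment_zero (hr : ∀ x, w x ≠ 0 → 0 < r x) (hw : ∑ x, w x ≠ 0) :
    HasDerivAt (logMoment w r) ((∑ x, w x * log (r x)) / ∑ x, w x) 0 := by
  simpa using hasDerivAt_logMoment hr (t := 0) (by simpa using hw)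

lemma tendsto_inv_mul_logMoment_sub (hr : ∀ x, w x ≠ 0 → 0 < r x) (hs : ∀ x, w x ≠ 0 → 0 < s x)
    (hw : ∑ x, w x ≠ 0) :
    Tendsto (fun t => t⁻¹ * (logMoment w r t - logMoment w s t)) (𝓝[≠] 0)
      (𝓝 ((∑ x, w x * log (r x)) / ∑ x, w x - (∑ x, w x * log (s x)) / ∑ x, w x)) := by
  have hderiv := (hasDerivAt_logMoment_zero hr hw).sub (hasDerivAt_logMoment_zero hs hw)
  simpa [logMoment_zero] using hderiv.tendsto_slope_zero

lemma tendsto_logMoment_zero (hr : ∀ x, w x ≠ 0 → 0 < r x) (hw : ∑ x, w x ≠ 0) :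
    Tendsto (logMoment w r) (𝓝[≠] 0) (𝓝 (log (∑ x, w x))) := by
  rw [← logMoment_zero w r]
  exact (hasDerivAt_logMoment_zero hr hw).continuousAt.tendsto.mono_left nhdsWithin_le_nhds

lemma logMoment_self_sub_one (hr : ∀ x, 0 ≤ r x) {α : ℝ} (hα : α ≠ 0) :
    logMoment r r (α - 1) = log (∑ x, r x ^ α) := by
  have hpow (x : X) : r x * r x ^ (α - 1) = r x ^ α := by
    rw [mul_comm, ← rpow_add_one' (hr x) (by simpa using hα), sub_add_cancel]
  simp only [logMoment, hpow]

lemma relAlphaEntropy_eq_logMoment (hp : ∀ x, 0 ≤ p x) (hq : ∀ x, 0 ≤ q x) {α : ℝ}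
    (hα₀ : α ≠ 0) (hα₁ : α ≠ 1) :
    relAlphaEntropy p q α =
      (α - 1)⁻¹ * (logMoment p p (α - 1) - logMoment p q (α - 1))
        - logMoment p q (α - 1) + logMoment q q (α - 1) := by
  have hsub : α - 1 ≠ 0 := sub_ne_zero.2 hα₁
  have hcoeff : α / (1 - α) = -(α - 1)⁻¹ - 1 := by
    rw [← neg_sub α 1]
    field_simp
    ring
  have hinv : 1 / (1 - α) = -(α - 1)⁻¹ := by rw [← neg_sub α 1, one_div, inv_neg]
  rw [logMoment_self_sub_one hp hα₀, logMoment_self_sub_one hq hα₀]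
  simp only [relAlphaEntropy, logMoment, hcoeff, hinv]
  ring

lemma sum_div_mul_log_div_div (hpq : ∀ x, p x ≠ 0 → q x ≠ 0) {P Q : ℝ} (hP : ∑ x, p x = P)
    (hP₀ : P ≠ 0) (hQ₀ : Q ≠ 0) :
    ∑ x, p x / P * log (p x / P / (q x / Q)) =
      (∑ x, p x * log (p x)) / P - (∑ x, p x * log (q x)) / P - log P + log Q := by
  have hterm (x : X) : p x / P * log (p x / P / (q x / Q)) =
      p x * log (p x) / P - p x * log (q x) / P - p x / P * (log P - log Q) := by
    obtain hx | hx := eq_or_ne (p x) 0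
    · simp [hx]
    · rw [log_div (div_ne_zero hx hP₀) (div_ne_zero (hpq x hx) hQ₀), log_div hx hP₀,
        log_div (hpq x hx) hQ₀]
      ring
  simp only [hterm, Finset.sum_sub_distrib, ← Finset.sum_div, ← Finset.sum_mul, hP,
    div_self hP₀]
  ring

lemma sum_ne_zero_of_support_subset (hq : ∀ x, 0 ≤ q x)
    (hpq : Function.support p ⊆ Function.support q) (hP : ∑ x, p x ≠ 0) : ∑ x, q x ≠ 0 := by
  obtain ⟨x, hx, hpx⟩ := Finset.exists_ne_zero_of_sum_ne_zero hP
  exact (Finset.sum_pos' (fun y _ => hq y) ⟨x, hx, (hq x).lt_of_ne' (hpq hpx)⟩).ne'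

theorem relAlphaEntropy_tendsto_KL_general (hp : ∀ x, 0 ≤ p x) (hq : ∀ x, 0 ≤ q x)
    (hpq : ∀ x, q x = 0 → p x = 0) (hP : ∑ x, p x ≠ 0) :
    Tendsto (relAlphaEntropy p q) (𝓝[≠] 1)
      (𝓝 (∑ x, p x / (∑ y, p y) * log (p x / (∑ y, p y) / (q x / ∑ y, q y)))) := by
  have hpq' (x : X) (hx : p x ≠ 0) : 0 < q x := (hq x).lt_of_ne' (mt (hpq x) hx)
  have hQ : ∑ x, q x ≠ 0 :=
    sum_ne_zero_of_support_subset hq (fun x hx => (hpq' x hx).ne') hP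
  have hpp (x : X) (hx : p x ≠ 0) : 0 < p x := (hp x).lt_of_ne' hx
  have hqq (x : X) (hx : q x ≠ 0) : 0 < q x := (hq x).lt_of_ne' hx
  have hlim := ((tendsto_inv_mul_logMoment_sub hpp hpq' hP).sub
    (tendsto_logMoment_zero hpq' hP)).add (tendsto_logMoment_zero hqq hQ)
  rw [← sum_div_mul_log_div_div (fun x hx => (hpq' x hx).ne') rfl hP hQ] at hlim
  have hsub : Tendsto (fun α : ℝ => α - 1) (𝓝[≠] 1) (𝓝[≠] 0) := by
    rw [← sub_self (1 : ℝ)]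
    exact ((Homeomorph.subRight (1 : ℝ)).map_punctured_nhds_eq 1).le
  have hne : ∀ᶠ α : ℝ in 𝓝[≠] 1, α ≠ 0 :=
    (eventually_ne_nhds one_ne_zero).filter_mono nhdsWithin_le_nhds
  refine (hlim.comp hsub).congr' ?_
  filter_upwards [self_mem_nhdsWithin, hne] with α hα₁ hα₀
  exact (relAlphaEntropy_eq_logMoment hp hq hα₀ hα₁).symm

end

/-- As α → 1, the relative α-entropy converges to the KL divergence. -/
theorem relAlphaEntropy_tendsto_KL {X : Type*} [Fintype X]
    (p q : X → ℝ) (hp : ∀ x, 0 < p x) (hq : ∀ x, 0 < q x)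
    (hps : ∑ x, p x = 1) (hqs : ∑ x, q x = 1) :
    Tendsto (fun α : ℝ =>
        (α / (1 - α)) * Real.log (∑ x, p x * (q x) ^ (α - 1))
          - (1 / (1 - α)) * Real.log (∑ x, (p x) ^ α)
          + Real.log (∑ x, (q x) ^ α))
      (nhdsWithin 1 {1}ᶜ)
      (nhds (∑ x, p x * Real.log (p x / q x))) := by
  have hlim := relAlphaEntropy_tendsto_KL_general (fun x => (hp x).le) (fun x => (hq x).le)
    (fun x hx => absurd hx (hq x).ne') (by simp [hps])
  simpa only [hps, hqs, div_one] using! hlim
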